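/- There is a constant C > 0, depending only on α, such that for all t ≥ 3/2 one has |K_0^α(t,1)| ≤ C · t^{−3}, and for every integer n ≠ 0 and all t ≥ 3/2 one has |K_n^α(t,1)| ≤ C · t^{−(|n|+2)}. -/

import Mathlib

open Real

/-- Parametrization of the infinite straight cone of opening angle `2α`. -/
noncomputable def coneParam (α t θ : ℝ) : EuclideanSpace ℝ (Fin 3) :=
  !₂[sin α * t * cos θ, sin α * t * sin θ, cos α * t]

/-- Outward unit normal of the cone. -/
noncomputable def coneNormal (α θ : ℝ) : EuclideanSpace ℝ (Fin 3) :=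
  !₂[cos α * cos θ, cos α * sin θ, -sin α]

/-- The layer-potential kernel of the infinite straight cone. -/
noncomputable def coneKernel (α t θ t' θ' : ℝ) : ℝ :=
  (inner ℝ (coneParam α t θ - coneParam α t' θ') (coneNormal α θ) : ℝ) /
    ‖coneParam α t' θ' - coneParam α t θ‖ ^ 3

/-- The `n`-th modal kernel `K_n^α(t,t') = (1/(2π)) ∫₀^{2π} e^{−inθ} K^{Γ_α}(t,θ,t',0) dθ`. -/
noncomputable def modalKernel (α : ℝ) (n : ℤ) (t t' : ℝ) : ℂ :=
  ((1 / (2 * π) : ℝ) : ℂ) *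
    ∫ θ in (0:ℝ)..(2 * π), Complex.exp (-Complex.I * (n : ℂ) * (θ : ℂ)) * (coneKernel α t θ t' 0 : ℂ)


noncomputable def auxD (α t : ℝ) (z : ℂ) : ℂ :=
  (t:ℂ) ^ 2 + 1 - 2 * t * ((sin α : ℂ) ^ 2 * Complex.cos z + (cos α : ℂ) ^ 2)

noncomputable def auxG (α t : ℝ) (n : ℤ) (z : ℂ) : ℂ :=
  Complex.exp (-Complex.I * (n : ℂ) * z) *
    ((sin α : ℂ) * (cos α : ℂ) * (1 - Complex.cos z) / ((auxD α t z) ^ (1 / 2 : ℂ)) ^ 3)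

lemma ccos_re (z : ℂ) : (Complex.cos z).re = cos z.re * cosh z.im := by
  conv_lhs => rw [Complex.cos_eq]
  simp [← Complex.ofReal_cos, ← Complex.ofReal_cosh, ← Complex.ofReal_sin, ← Complex.ofReal_sinh]

lemma auxD_re (α t : ℝ) (ht : 3 / 2 ≤ t) (z : ℂ)
    (hz : 2 * t * cosh z.im ≤ t ^ 2 + 1) :
    cos α ^ 2 * (t / 3) ^ 2 ≤ (auxD α t z).re := by
  have h1 : (auxD α t z).re = t ^ 2 + 1 - 2 * t * (sin α ^ 2 * (cos z.re * cosh z.im) + cos α ^ 2) := by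
    rw [← ccos_re]
    have : auxD α t z = ((t ^ 2 + 1 - 2 * t * cos α ^ 2 : ℝ) : ℂ)
        - ((2 * t * sin α ^ 2 : ℝ) : ℂ) * Complex.cos z := by
      unfold auxD; push_cast; ring
    rw [this, Complex.sub_re, Complex.re_ofReal_mul, Complex.ofReal_re]
    ring
  rw [h1]
  have hc : cos z.re * cosh z.im ≤ cosh z.im := by
    nlinarith [cos_le_one z.re, cosh_pos z.im]
  have hs := sin_sq_add_cos_sq α
  have h2 : 2 * t * (cos z.re * cosh z.im) ≤ t ^ 2 + 1 := by nlinarith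
  have h3 : sin α ^ 2 * (2 * t * (cos z.re * cosh z.im)) ≤ sin α ^ 2 * (t ^ 2 + 1) :=
    mul_le_mul_of_nonneg_left h2 (sq_nonneg _)
  have h4 : cos α ^ 2 * (t / 3) ^ 2 ≤ cos α ^ 2 * (t - 1) ^ 2 :=
    mul_le_mul_of_nonneg_left (by nlinarith) (sq_nonneg _)
  have h5 : sin α ^ 2 = 1 - cos α ^ 2 := by linarith
  rw [h5] at h3 ⊢
  nlinarith

lemma auxG_norm (α t : ℝ) (hc : cos α ≠ 0) (ht : 3 / 2 ≤ t) (n : ℤ) (z : ℂ)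
    (hz : 2 * t * cosh z.im ≤ t ^ 2 + 1) :
    ‖auxG α t n z‖ ≤ exp (n * z.im) * ((1 + cosh z.im) * (27 / cos α ^ 2 / t ^ 3)) := by
  have hD := auxD_re α t ht z hz
  have hcp : 0 < |cos α| := abs_pos.mpr hc
  have hpos : 0 < |cos α| * (t / 3) := by positivity
  have hn : (|cos α| * (t / 3)) ^ 2 ≤ ‖auxD α t z‖ := by
    rw [mul_pow, sq_abs]; exact hD.trans (Complex.re_le_norm _)
  have hr : |cos α| * (t / 3) ≤ ‖(auxD α t z) ^ (1 / 2 : ℂ)‖ := by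
    have : (1 / 2 : ℂ) = ((1 / 2 : ℝ) : ℂ) := by push_cast; rfl
    rw [this, Complex.norm_cpow_real, ← Real.sqrt_eq_rpow]
    exact Real.le_sqrt_of_sq_le hn
  have hcos : ‖Complex.cos z‖ ≤ cosh z.im := by
    have e1 : ‖Complex.exp (z * Complex.I)‖ = exp (-z.im) := by
      rw [Complex.norm_exp]; simp
    have e2 : ‖Complex.exp (-z * Complex.I)‖ = exp (z.im) := by
      rw [Complex.norm_exp]; simp
    rw [Complex.cos, norm_div, Real.cosh_eq]
    have := norm_add_le (Complex.exp (z * Complex.I)) (Complex.exp (-z * Complex.I))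
    rw [e1, e2] at this
    simp only [Complex.norm_ofNat]
    linarith
  have h1c : ‖1 - Complex.cos z‖ ≤ 1 + cosh z.im := by
    refine (norm_sub_le _ _).trans ?_
    simp only [norm_one]; linarith
  have he : ‖Complex.exp (-Complex.I * (n : ℂ) * z)‖ = exp (n * z.im) := by
    rw [Complex.norm_exp]; simp
  unfold auxG
  rw [norm_mul, he, norm_div, norm_mul, norm_mul, norm_pow]
  refine mul_le_mul_of_nonneg_left ?_ (exp_pos _).le
  have hs : ‖(sin α : ℂ)‖ ≤ 1 := by
    rw [Complex.norm_real]; exact abs_sin_le_one α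
  have hcn : ‖(cos α : ℂ)‖ = |cos α| := by rw [Complex.norm_real]; rfl
  rw [hcn]
  have hch := cosh_pos z.im
  calc _ ≤ 1 * |cos α| * (1 + cosh z.im) / (|cos α| * (t / 3)) ^ 3 := by gcongr
    _ = _ := by
      rw [← sq_abs (cos α)]
      field_simp
      ring

lemma auxG_diff (α t : ℝ) (hc : cos α ≠ 0) (ht : 3 / 2 ≤ t) (n : ℤ) (z : ℂ)
    (hz : 2 * t * cosh z.im ≤ t ^ 2 + 1) :
    DifferentiableAt ℂ (auxG α t n) z := by
  have hD := auxD_re α t ht z hz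
  have hp : 0 < (auxD α t z).re := lt_of_lt_of_le (by positivity) hD
  have hd : DifferentiableAt ℂ (auxD α t) z := by
    unfold auxD; fun_prop
  have hne : auxD α t z ≠ 0 := by
    intro h; rw [h] at hp; simp at hp
  unfold auxG
  refine DifferentiableAt.mul (by fun_prop) (DifferentiableAt.div (by fun_prop) ?_ ?_)
  · exact (hd.cpow (by fun_prop) (Or.inl hp)).pow 3
  · refine pow_ne_zero 3 ?_
    rw [Complex.cpow_def_of_ne_zero hne]
    exact Complex.exp_ne_zero _

lemma auxG_periodic (α t : ℝ) (n : ℤ) (z : ℂ) :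
    auxG α t n (z + 2 * π) = auxG α t n z := by
  unfold auxG auxD
  rw [Complex.cos_add_two_pi]
  congr 1
  rw [mul_add, Complex.exp_add]
  have : -Complex.I * (n : ℂ) * (2 * π) = ((-n : ℤ) : ℂ) * (2 * π * Complex.I) := by
    push_cast; ring
  rw [this, Complex.exp_int_mul_two_pi_mul_I, mul_one]

lemma auxG_shift (α t : ℝ) (hc : cos α ≠ 0) (ht : 3 / 2 ≤ t) (n : ℤ) (Y : ℝ)
    (hY : 2 * t * cosh Y ≤ t ^ 2 + 1) :
    ∫ x in (0:ℝ)..(2 * π), auxG α t n (x : ℂ) =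
      ∫ x in (0:ℝ)..(2 * π), auxG α t n (x + Y * Complex.I) := by
  have h := Complex.integral_boundary_rect_eq_zero_of_differentiableOn (auxG α t n) 0
    ((2 * π : ℝ) + Y * Complex.I) (by
      intro z hz
      refine (auxG_diff α t hc ht n z ?_).differentiableWithinAt
      have hz2 : z.im ∈ Set.uIcc 0 Y := by
        have := hz.2
        simpa using this
      have : |z.im| ≤ |Y| := by
        have := Set.abs_sub_left_of_mem_uIcc hz2
        simpa using this
      have h3 := cosh_le_cosh.mpr this
      refine le_trans ?_ hY
      gcongr)
  have hper : ∀ y : ℝ, auxG α t n (2 * π + y * Complex.I) = auxG α t n (y * Complex.I) := by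
    intro y; rw [add_comm, auxG_periodic]
  simp [hper] at h
  exact sub_eq_zero.mp h

lemma coneKernel_eq (α t : ℝ) (hc : cos α ≠ 0) (ht : 3 / 2 ≤ t) (n : ℤ) (θ : ℝ) :
    Complex.exp (-Complex.I * (n : ℂ) * (θ : ℂ)) * (coneKernel α t θ 1 0 : ℂ) =
      auxG α t n (θ : ℂ) := by
  have hs := sin_sq_add_cos_sq θ
  have hsa := sin_sq_add_cos_sq α
  set D : ℝ := t ^ 2 + 1 - 2 * t * (sin α ^ 2 * cos θ + cos α ^ 2) with hDdef
  have hD : auxD α t θ = (D : ℂ) := by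
    unfold auxD; rw [hDdef]; push_cast; rfl
  have hpos : 0 ≤ D := by
    have := auxD_re α t ht θ (by simp; nlinarith [sq_nonneg (t - 1)])
    rw [hD, Complex.ofReal_re] at this
    exact le_trans (by positivity) this
  have hnorm : ‖coneParam α 1 0 - coneParam α t θ‖ = D ^ (1 / 2 : ℝ) := by
    rw [EuclideanSpace.norm_eq, ← Real.sqrt_eq_rpow]
    congr 1
    simp [Fin.sum_univ_three, coneParam]
    rw [hDdef]
    linear_combination (sin α ^ 2 * t ^ 2) * hs + (t ^ 2 + 1) * hsa
  have hinner : (inner ℝ (coneParam α t θ - coneParam α 1 0) (coneNormal α θ) : ℝ)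
      = sin α * cos α * (1 - cos θ) := by
    simp [PiLp.inner_apply, Fin.sum_univ_three, coneParam, coneNormal]
    linear_combination (sin α * cos α * t) * hs
  unfold auxG coneKernel
  rw [hD, hnorm, hinner]
  push_cast [Complex.ofReal_cpow hpos]
  rfl

lemma modal_bound (α t : ℝ) (hc : cos α ≠ 0) (ht : 3 / 2 ≤ t) (n : ℤ) (Y : ℝ)
    (hY : 2 * t * cosh Y ≤ t ^ 2 + 1) :
    ‖modalKernel α n t 1‖ ≤ exp (n * Y) * ((1 + cosh Y) * (27 / cos α ^ 2 / t ^ 3)) := by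
  unfold modalKernel
  simp_rw [coneKernel_eq α t hc ht n]
  rw [auxG_shift α t hc ht n Y hY, norm_mul, Complex.norm_real]
  have := intervalIntegral.norm_integral_le_of_norm_le_const (a := 0) (b := 2 * π)
    (f := fun x : ℝ => auxG α t n (x + Y * Complex.I))
    (C := exp (n * Y) * ((1 + cosh Y) * (27 / cos α ^ 2 / t ^ 3))) (by
      intro x _
      have := auxG_norm α t hc ht n (x + Y * Complex.I) (by simpa using hY)
      simpa using this)
  have hpi := Real.pi_pos
  rw [sub_zero, abs_of_pos (by positivity)] at this
  rw [Real.norm_of_nonneg (by positivity)]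
  calc _ ≤ 1 / (2 * π) * (exp (n * Y) * ((1 + cosh Y) * (27 / cos α ^ 2 / t ^ 3)) * (2 * π)) := by
        gcongr
    _ = _ := by field_simp

theorem modalKernel_decay_infinity (α : ℝ) (hα0 : 0 < α) (hαπ : α < π) (hα2 : α ≠ π / 2) :
    ∃ C : ℝ, 0 < C ∧
      (∀ t : ℝ, 3 / 2 ≤ t → ‖modalKernel α 0 t 1‖ ≤ C / t ^ 3) ∧
      (∀ n : ℤ, n ≠ 0 → ∀ t : ℝ, 3 / 2 ≤ t →
        ‖modalKernel α n t 1‖ ≤ C / t ^ (n.natAbs + 2)) := by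
  have hc : cos α ≠ 0 := by
    intro h
    apply hα2
    apply Real.injOn_cos ⟨hα0.le, hαπ.le⟩ ⟨by positivity, by linarith [Real.pi_pos]⟩
    rw [h, Real.cos_pi_div_two]
  refine ⟨54 / cos α ^ 2, by positivity, ?_, ?_⟩
  · intro t ht
    have := modal_bound α t hc ht 0 0 (by simp; nlinarith [sq_nonneg (t - 1)])
    simp at this
    refine this.trans (le_of_eq ?_)
    ring
  · intro n hn t ht
    have ht0 : 0 < t := by linarith
    have key : ∀ Y : ℝ, cosh Y = cosh (log t) → (n : ℝ) * Y = -(n.natAbs * log t) →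
        ‖modalKernel α n t 1‖ ≤ 54 / cos α ^ 2 / t ^ (n.natAbs + 2) := by
      intro Y h1 h2
      have hch : cosh (log t) = (t + t⁻¹) / 2 := Real.cosh_log ht0
      have h3 : 2 * t * cosh Y = t ^ 2 + 1 := by
        rw [h1, hch]; field_simp
      have h4 : 1 + cosh Y ≤ 2 * t := by nlinarith
      have h5 : exp (n * Y) = 1 / t ^ n.natAbs := by
        rw [h2, exp_neg, exp_nat_mul, exp_log ht0, one_div]
      have := modal_bound α t hc ht n Y h3.le
      rw [h5] at this
      refine this.trans ?_
      calc _ ≤ 1 / t ^ n.natAbs * ((2 * t) * (27 / cos α ^ 2 / t ^ 3)) := by gcongr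
        _ = _ := by rw [pow_add]; field_simp; norm_num
    rcases le_total 0 n with h | h
    · refine key (-log t) (cosh_neg _) ?_
      have : ((n.natAbs : ℤ) : ℝ) = n := by rw [Int.natAbs_of_nonneg h]
      push_cast at this
      rw [Nat.cast_natAbs, abs_of_nonneg h]; ring
    · refine key (log t) rfl ?_
      rw [Nat.cast_natAbs, abs_of_nonpos h]; push_cast; ring
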